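/- Let P be a finite bounded extremal poset. Then the m-cover poset P^⟨m⟩ is extremal for every integer m > 0 if and only if either (0̂ ∈ M(P) and 1̂ ∈ J(P)) or (0̂ ∉ M(P) and 1̂ ∉ J(P)), i.e., either 0̂ has a unique upper cover and 1̂ has a unique lower cover, or neither of these holds. -/

import Mathlib

/-- The defining shape of elements of the `m`-cover poset: a tuple consisting of
`l₀` copies of `⊥`, then `l₁` copies of `p₁`, then `l₂` copies of `p₂`,
where `p₁ ⋖ p₂` is a cover relation. -/
def IsMCoverTuple {α : Type*} [PartialOrder α] [OrderBot α] (m : ℕ) (f : Fin m → α) : Prop :=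
  ∃ (l₀ l₁ l₂ : ℕ) (p₁ p₂ : α), l₀ + l₁ + l₂ = m ∧ p₁ ⋖ p₂ ∧
    ∀ i : Fin m, f i = if (i : ℕ) < l₀ then ⊥ else if (i : ℕ) < l₀ + l₁ then p₁ else p₂

/-- The `m`-cover poset of `α`, as a subposet of the `m`-fold direct product `Fin m → α`
with the componentwise order. -/
abbrev MCover (α : Type*) [PartialOrder α] [OrderBot α] (m : ℕ) : Type _ :=
  {f : Fin m → α // IsMCoverTuple m f}

/-- A partial order is a lattice: any two elements have a least upper bound and a
greatest lower bound. -/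
def IsLatticeOrder (β : Type*) [PartialOrder β] : Prop :=
  (∀ a b : β, ∃ c, IsLUB {a, b} c) ∧ (∀ a b : β, ∃ c, IsGLB {a, b} c)

/-- An element is join-irreducible: non-minimal with exactly one lower cover. -/
def JoinIrred {β : Type*} [PartialOrder β] (x : β) : Prop :=
  (∃ y, y < x) ∧ ∃! y, y ⋖ x

/-- An element is meet-irreducible: non-maximal with exactly one upper cover. -/
def MeetIrred {β : Type*} [PartialOrder β] (x : β) : Prop :=
  (∃ y, x < y) ∧ ∃! y, x ⋖ y

/-- The length of a bounded poset: the maximum length of a chain from the least element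
to the greatest element. -/
noncomputable def posetLength (β : Type*) [PartialOrder β] : ℕ :=
  sSup {n : ℕ | ∃ f : Fin (n + 1) → β, StrictMono f ∧ IsBot (f 0) ∧ IsTop (f (Fin.last n))}

/-- A bounded poset is extremal if its numbers of join-irreducible and of meet-irreducible
elements both equal its length. -/
def Extremal (β : Type*) [PartialOrder β] : Prop :=
  Nat.card {x : β // JoinIrred x} = posetLength β ∧
  Nat.card {x : β // MeetIrred x} = posetLength β

theorem joinIrred_iff_exists_isGreatest {β : Type*} [PartialOrder β] [Finite β] {x : β} :
    JoinIrred x ↔ ∃ c, IsGreatest (Set.Iio x) c := by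
  constructor
  · rintro ⟨-, c, hc, huniq⟩
    refine ⟨c, hc.lt, fun y hy => ?_⟩
    obtain ⟨z, hyz, hz⟩ := exists_le_covBy_of_lt hy
    exact huniq z hz ▸ hyz
  · rintro ⟨c, hc, hmax⟩
    refine ⟨⟨c, hc⟩, c, ⟨hc, fun z hcz hzx => (hmax hzx).not_gt hcz⟩, fun y hy => ?_⟩
    exact (hmax hy.lt).eq_of_not_lt fun h => hy.2 h hc

theorem meetIrred_iff_exists_isLeast {β : Type*} [PartialOrder β] [Finite β] {x : β} :
    MeetIrred x ↔ ∃ c, IsLeast (Set.Ioi x) c := by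
  constructor
  · rintro ⟨-, c, hc, huniq⟩
    refine ⟨c, hc.lt, fun y hy => ?_⟩
    obtain ⟨z, hz, hyz⟩ := exists_covBy_le_of_lt hy
    exact huniq z hz ▸ hyz
  · rintro ⟨c, hc, hmin⟩
    refine ⟨⟨c, hc⟩, c, ⟨hc, fun z hxz hzc => (hmin hxz).not_gt hzc⟩, fun y hy => ?_⟩
    exact ((hmin hy.lt).eq_of_not_lt fun h => hy.2 hc h).symm

theorem IsLeast.covBy {β : Type*} [PartialOrder β] {x c : β} (h : IsLeast (Set.Ioi x) c) :
    x ⋖ c :=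
  ⟨h.1, fun _ hxz hzc => (h.2 hxz).not_gt hzc⟩

theorem IsGreatest.covBy {β : Type*} [PartialOrder β] {x c : β}
    (h : IsGreatest (Set.Iio x) c) : c ⋖ x :=
  ⟨h.1, fun _ hcz hzx => (h.2 hzx).not_gt hcz⟩

theorem IsMCoverTuple.eq_bot_or_wcovBy {α : Type*} [PartialOrder α] [OrderBot α] {m : ℕ}
    {f : Fin m → α} (hf : IsMCoverTuple m f) {i j : Fin m} (hij : i < j) :
    f i = ⊥ ∨ f i ⩿ f j := by
  obtain ⟨a, b, c, p, q, -, hpq, h⟩ := hf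
  have hij' : (i : ℕ) < j := hij
  rw [h i, h j]
  split_ifs
  all_goals first
    | exact Or.inl rfl
    | exact Or.inr (WCovBy.refl _)
    | exact Or.inr hpq.wcovBy
    | omega

theorem monotone_of_eq_bot_or_wcovBy {α : Type*} [PartialOrder α] [OrderBot α] {m : ℕ}
    {f : Fin m → α} (hf : ∀ i j, i < j → f i = ⊥ ∨ f i ⩿ f j) : Monotone f := by
  intro i j hij
  rcases hij.eq_or_lt with rfl | h
  · exact le_rfl
  · rcases hf i j h with h | h
    · simp [h]
    · exact h.le

theorem IsMCoverTuple.monotone {α : Type*} [PartialOrder α] [OrderBot α] {m : ℕ}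
    {f : Fin m → α} (hf : IsMCoverTuple m f) : Monotone f :=
  monotone_of_eq_bot_or_wcovBy fun _ _ => hf.eq_bot_or_wcovBy

/-- In a monotone tuple the entries satisfying an upward closed condition form a final segment. -/
theorem exists_forall_le_iff_of_monotone {α : Type*} [Preorder α] {m : ℕ} {f : Fin m → α}
    (hf : Monotone f) {P : α → Prop} (hP : ∀ x y, x ≤ y → P x → P y) :
    ∃ a ≤ m, ∀ i : Fin m, P (f i) ↔ a ≤ i := by
  classical
  by_cases h : ∃ a : ℕ, ∃ ha : a < m, P (f ⟨a, ha⟩)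
  · obtain ⟨ha, hPa⟩ := Nat.find_spec h
    refine ⟨Nat.find h, ha.le, fun i => ⟨fun hi => Nat.find_min' h ⟨i.2, hi⟩, fun hi => ?_⟩⟩
    exact hP _ _ (hf (show (⟨Nat.find h, ha⟩ : Fin m) ≤ i from hi)) hPa
  · push Not at h
    exact ⟨m, le_rfl, fun i => iff_of_false (h i i.2) (by omega)⟩

/-- A tuple lies in the `m`-cover poset iff any two of its entries, in order, either start with
`⊥` or are equal or form a cover. -/
theorem isMCoverTuple_iff {α : Type*} [Finite α] [PartialOrder α] [BoundedOrder α]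
    [Nontrivial α] {m : ℕ} {f : Fin m → α} :
    IsMCoverTuple m f ↔ ∀ i j, i < j → f i = ⊥ ∨ f i ⩿ f j := by
  refine ⟨fun hf _ _ => hf.eq_bot_or_wcovBy, fun hf => ?_⟩
  have hmono := monotone_of_eq_bot_or_wcovBy hf
  obtain ⟨a, ham, ha⟩ := exists_forall_le_iff_of_monotone hmono (P := fun x => x ≠ ⊥)
    fun x y hxy hx hy => hx (le_bot_iff.1 (hy ▸ hxy))
  have hbot : ∀ i : Fin m, (i : ℕ) < a → f i = ⊥ := fun i hi => by
    by_contra h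
    exact absurd ((ha i).1 h) (by omega)
  rcases ham.eq_or_lt with rfl | ham
  · obtain ⟨q, hq, -⟩ := exists_covBy_le_of_lt (bot_lt_top (α := α))
    exact ⟨a, 0, 0, ⊥, q, by simp, hq, fun i => by simp [hbot i i.2]⟩
  set p := f ⟨a, ham⟩ with hp
  have hp0 : p ≠ ⊥ := (ha _).2 le_rfl
  have hle : ∀ i : Fin m, a ≤ i → p ⩿ f i := fun i hi => by
    rcases hi.eq_or_lt with h | h
    · rw [hp, show (⟨a, ham⟩ : Fin m) = i from Fin.ext h]
      exact WCovBy.refl _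
    · exact (hf ⟨a, ham⟩ i h).resolve_left hp0
  obtain ⟨b, hbm, hb⟩ := exists_forall_le_iff_of_monotone hmono (P := fun x => p < x)
    fun x y hxy hx => hx.trans_le hxy
  have hab : a < b := by
    by_contra! h
    exact ((hb ⟨a, ham⟩).2 h).false
  have hmid : ∀ i : Fin m, a ≤ i → (i : ℕ) < b → f i = p := fun i hi hib =>
    ((hle i hi).le.eq_of_not_lt fun h => by have := (hb i).1 h; omega).symm
  rcases hbm.eq_or_lt with rfl | hbm
  · obtain ⟨r, -, hr⟩ := exists_le_covBy_of_lt (bot_lt_iff_ne_bot.2 hp0)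
    refine ⟨a, 0, b - a, r, p, by omega, hr, fun i => ?_⟩
    split_ifs with h₁ h₂
    · exact hbot i h₁
    · omega
    · exact hmid i (by omega) i.2
  · have hpq : p ⋖ f ⟨b, hbm⟩ := (hle _ hab.le).covBy_of_lt ((hb _).2 le_rfl)
    refine ⟨a, b - a, m - b, p, f ⟨b, hbm⟩, by omega, hpq, fun i => ?_⟩
    split_ifs with h₁ h₂
    · exact hbot i h₁
    · exact hmid i (by omega) (by omega)
    · have hbi : b ≤ i := by omega
      have hle' : f ⟨b, hbm⟩ ≤ f i := hmono hbi
      exact ((hle i (by omega)).eq_or_eq hpq.le hle').resolve_left hpq.lt.ne' |>.symm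

/-! ### Length -/

theorem bddAbove_chain_lengths (β : Type*) [PartialOrder β] [Finite β] :
    BddAbove {n : ℕ | ∃ f : Fin (n + 1) → β, StrictMono f ∧ IsBot (f 0) ∧
      IsTop (f (Fin.last n))} := by
  refine ⟨Nat.card β, ?_⟩
  rintro n ⟨f, hf, -⟩
  have := Nat.card_le_card_of_injective f hf.injective
  simp at this
  omega

theorem le_of_strictMono_fin {n : ℕ} {f : Fin (n + 1) → ℕ} (hf : StrictMono f) :
    n ≤ f (Fin.last n) := by
  have key : ∀ k (hk : k < n + 1), k ≤ f ⟨k, hk⟩ := by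
    intro k
    induction k with
    | zero => simp
    | succ k ih =>
      intro hk
      have := hf (show (⟨k, by omega⟩ : Fin (n + 1)) < ⟨k + 1, hk⟩ by simp)
      have := ih (by omega)
      omega
  exact key n (by omega)

/-- A finite bounded order carries a strictly monotone rank function `h` together with a chain
from `⊥` to `⊤` passing through every rank. -/
theorem exists_strictMono_nat (α : Type*) [Finite α] [PartialOrder α] [BoundedOrder α] :
    ∃ (h : α → ℕ) (c : ℕ → α), StrictMono h ∧ c 0 = ⊥ ∧ c (h ⊤) = ⊤ ∧
      (∀ k, k ≤ h ⊤ → h (c k) = k) ∧ ∀ i j, i < j → j ≤ h ⊤ → c i < c j := by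
  have hfin : ∀ x : α, Order.height x < ⊤ := by
    intro x
    refine lt_of_le_of_lt (Order.height_le (n := (Nat.card α : ℕ)) fun s _ => ?_)
      (ENat.natCast_lt_top _)
    have := Nat.card_le_card_of_injective s s.strictMono.injective
    simp at this
    exact_mod_cast (Nat.le_succ _).trans this
  have hcoe : ∀ x : α, ((Order.height x).toNat : ℕ∞) = Order.height x :=
    fun x => ENat.natCast_toNat (hfin x).ne
  obtain ⟨s, hlast, hlen⟩ := Order.exists_series_of_height_eq_coe (⊤ : α) (hcoe ⊤).symm
  have hidx := Order.height_eq_index_of_length_eq_height_last (p := s)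
    (by rw [hlast, hlen, hcoe])
  refine ⟨fun x => (Order.height x).toNat, fun k => s (Fin.ofNat _ k), ?_, ?_, ?_, ?_, ?_⟩
  · intro x y hxy
    have := Order.height_strictMono hxy (hfin x)
    rw [← hcoe x, ← hcoe y] at this
    exact_mod_cast this
  · have := hidx 0
    simpa using this
  · change s (Fin.ofNat _ (Order.height ⊤).toNat) = ⊤
    rw [← hlen, ← hlast]
    simp [RelSeries.last]
  · intro k hk
    have := hidx (Fin.ofNat _ k)
    have hk' : k < s.length + 1 := by rw [hlen]; exact Nat.lt_succ_of_le hk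
    change (Order.height (s (Fin.ofNat _ k))).toNat = k
    rw [this, ENat.toNat_natCast, Fin.val_ofNat, Nat.mod_eq_of_lt hk']
  · intro i j hij hj
    have hj' : j < s.length + 1 := by rw [hlen]; exact Nat.lt_succ_of_le hj
    refine s.strictMono (Fin.lt_def.2 ?_)
    simpa [Nat.mod_eq_of_lt hj', Nat.mod_eq_of_lt (hij.trans hj')] using hij

theorem posetLength_eq {β : Type*} [PartialOrder β] [Finite β] {h : β → ℕ} {c : ℕ → β} {n : ℕ}
    (hh : StrictMono h) (hle : ∀ x, h x ≤ n)
    (hc : ∀ k, k < n → c k < c (k + 1)) (hbot : IsBot (c 0)) (htop : IsTop (c n)) :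
    posetLength β = n := by
  refine le_antisymm (csSup_le' ?_) (le_csSup (bddAbove_chain_lengths β) ?_)
  · rintro k ⟨f, hf, -⟩
    exact (le_of_strictMono_fin (hh.comp hf)).trans (hle _)
  · refine ⟨fun i => c i, Fin.strictMono_iff_lt_succ.2 fun i => ?_, by simpa, by simpa⟩
    simpa using hc i i.2

theorem posetLength_mCover {α : Type*} [Finite α] [PartialOrder α] [BoundedOrder α]
    [Nontrivial α] {m : ℕ} (hm : 0 < m) : posetLength (MCover α m) = m * posetLength α := by
  obtain ⟨h, c, hh, hc0, hcT, hck, hlt⟩ := exists_strictMono_nat α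
  set l := h ⊤ with hl
  have hcov : ∀ i, i < l → c i ⋖ c (i + 1) := by
    refine fun i hi => ⟨hlt _ _ i.lt_succ_self hi, fun z hz₁ hz₂ => ?_⟩
    have h₁ := hh hz₁
    have h₂ := hh hz₂
    rw [hck _ hi.le] at h₁
    rw [hck _ hi] at h₂
    omega
  have hα : posetLength α = l :=
    posetLength_eq hh (fun x => hh.monotone le_top) (fun k hk => (hcov k hk).lt)
      (hc0 ▸ isBot_bot) (hcT ▸ isTop_top)
  have hmono : ∀ i j, i ≤ j → j ≤ l → c i ≤ c j := fun i j hij hj => by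
    rcases hij.eq_or_lt with rfl | hij
    · exact le_rfl
    · exact (hlt _ _ hij hj).le
  have hdiv : ∀ (k : ℕ) (i : Fin m), k ≤ m * l → (k + i) / m ≤ l := fun k i hk => by
    have : k + i < (l + 1) * m := by have := i.2; nlinarith
    exact Nat.le_of_lt_succ ((Nat.div_lt_iff_lt_mul hm).2 this)
  have hvalid : ∀ k, IsMCoverTuple m fun i : Fin m => c ((min k (m * l) + i) / m) := by
    refine fun k => isMCoverTuple_iff.2 fun i j hij => Or.inr ?_
    have hkl := hdiv (min k (m * l)) j (min_le_right _ _)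
    generalize min k (m * l) = k at *
    have h₁ : (k + i) / m ≤ (k + j) / m := Nat.div_le_div_right (by have := hij.le; omega)
    have h₂ : (k + j) / m ≤ (k + i) / m + 1 := by
      rw [← Nat.add_div_right _ hm]
      exact Nat.div_le_div_right (by omega)
    rcases h₁.eq_or_lt with h | h
    · simp [h]
    · have h₃ : (k + j) / m = (k + i) / m + 1 := by omega
      simpa only [h₃] using (hcov _ (by omega)).wcovBy
  rw [hα]
  refine posetLength_eq (h := fun f => ∑ i, h (f.1 i)) (c := fun k => ⟨_, hvalid k⟩) ?_ ?_ ?_ ?_ ?_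
  · intro f g hfg
    obtain ⟨hle, i, hi⟩ := Pi.lt_def.1 (Subtype.coe_lt_coe.2 hfg)
    exact Finset.sum_lt_sum (fun j _ => hh.monotone (hle j)) ⟨i, Finset.mem_univ _, hh hi⟩
  · intro f
    refine (Finset.sum_le_sum fun i _ => hh.monotone (le_top (a := f.1 i))).trans ?_
    simp [← hl]
  · intro k hk
    refine Subtype.coe_lt_coe.1 (Pi.lt_def.2 ⟨fun i => ?_, ⟨m - 1 - k % m, by omega⟩, ?_⟩)
    · exact hmono _ _ (Nat.div_le_div_right (by omega)) (hdiv _ _ (min_le_right _ _))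
    · refine hlt _ _ ?_ (hdiv _ _ (min_le_right _ _))
      rw [min_eq_left hk.le, min_eq_left hk]
      have h₁ := Nat.mod_lt k hm
      have h₂ := Nat.mod_add_div k m
      refine (Nat.div_lt_iff_lt_mul hm).2 (lt_of_lt_of_eq (b := k / m * m + m) ?_ ?_)
      · rw [mul_comm (k / m)]
        simp only
        omega
      · have : k + 1 + (m - 1 - k % m) = m * (k / m + 1) := by
          rw [mul_add]; omega
        rw [this, Nat.mul_div_cancel_left _ hm]
        ring
  · intro f i
    simp [Nat.div_eq_of_lt i.2, hc0]
  · intro f i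
    have : (m * l + i) / m = l := by
      rw [Nat.mul_add_div hm, Nat.div_eq_of_lt i.2, add_zero]
    simp [this, hcT]

/-! ### Irreducible elements -/

section Irreducibles

variable {α : Type*} {m : ℕ}

/-- The tuple with entries `⊥` before position `a` and `p` from position `a` on. -/
def botThen [PartialOrder α] [OrderBot α] (a : Fin m) (p : α) : Fin m → α :=
  fun i => if i < a then ⊥ else p

/-- The tuple with entries `p` up to position `a` (included) and `q` afterwards. -/
def splitAfter (a : Fin m) (p q : α) : Fin m → α := fun i => if i ≤ a then p else q

theorem botThen_of_lt [PartialOrder α] [OrderBot α] {a i : Fin m} {p : α} (h : i < a) :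
    botThen a p i = ⊥ :=
  if_pos h

theorem botThen_of_le [PartialOrder α] [OrderBot α] {a i : Fin m} {p : α} (h : a ≤ i) :
    botThen a p i = p :=
  if_neg h.not_gt

theorem splitAfter_of_le {a i : Fin m} {p q : α} (h : i ≤ a) : splitAfter a p q i = p :=
  if_pos h

theorem splitAfter_of_lt {a i : Fin m} {p q : α} (h : a < i) : splitAfter a p q i = q :=
  if_neg h.not_ge

theorem exists_first {P : Fin m → Prop} (h : ∃ i, P i) : ∃ a, P a ∧ ∀ j < a, ¬ P j := by
  obtain ⟨a, ha, hmin⟩ := wellFounded_lt.has_min {i | P i} h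
  exact ⟨a, ha, fun j hj hP => hmin j hP hj⟩

theorem exists_last {P : Fin m → Prop} (h : ∃ i, P i) : ∃ a, P a ∧ ∀ j, a < j → ¬ P j := by
  obtain ⟨a, ha, hmax⟩ := wellFounded_gt.has_min {i | P i} h
  exact ⟨a, ha, fun j hj hP => hmax j hP hj⟩

theorem IsMCoverTuple.wcovBy [PartialOrder α] [OrderBot α] {f : Fin m → α}
    (hf : IsMCoverTuple m f) {i j : Fin m}
    (hij : i ≤ j) (hi : f i ≠ ⊥) : f i ⩿ f j := by
  rcases hij.eq_or_lt with rfl | hij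
  · exact WCovBy.refl _
  · exact (hf.eq_bot_or_wcovBy hij).resolve_left hi

theorem apply_lt_of_lt_botThen [PartialOrder α] [OrderBot α] {g : Fin m → α}
    (hg : Monotone g) {a : Fin m} {p : α}
    (h : g < botThen a p) : g a < p := by
  refine lt_of_le_of_ne ((h.le a).trans_eq (botThen_of_le le_rfl)) fun hap => h.not_ge fun i => ?_
  rcases lt_or_ge i a with hi | hi
  · simp [botThen_of_lt hi]
  · rw [botThen_of_le hi, ← hap]
    exact hg hi

theorem JoinIrred.ne_bot [PartialOrder α] [OrderBot α] {p : α} (hp : JoinIrred p) : p ≠ ⊥ := by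
  rintro rfl
  exact not_lt_bot hp.1.choose_spec

theorem botThen_injective [PartialOrder α] [OrderBot α] {a b : Fin m} {p q : α} (hp : p ≠ ⊥)
    (hq : q ≠ ⊥) (h : botThen a p = botThen b q) : a = b ∧ p = q := by
  have hab : ¬ a < b := fun hab => hp <| by
    rw [← botThen_of_le (p := p) (le_refl a), h, botThen_of_lt hab]
  have hba : ¬ b < a := fun hba => hq <| by
    rw [← botThen_of_le (p := q) (le_refl b), ← h, botThen_of_lt hba]
  obtain rfl := le_antisymm (not_lt.1 hba) (not_lt.1 hab)
  exact ⟨rfl, by simpa only [botThen_of_le le_rfl] using congrFun h a⟩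

theorem splitAfter_injective {n : ℕ} {a b : Fin (n + 1)} {p q p' q' : α} (hp : p ≠ q)
    (hp' : p' ≠ q') (h : splitAfter a p q = splitAfter b p' q') : a = b ∧ p = p' := by
  obtain rfl : p = p' := by
    simpa only [splitAfter_of_le (Fin.zero_le _)] using congrFun h 0
  have hab : ¬ a < b := fun hab => hp <| by
    have := congrFun h b
    rwa [splitAfter_of_lt hab, splitAfter_of_le le_rfl, eq_comm] at this
  have hba : ¬ b < a := fun hba => hp' <| by
    have := congrFun h a
    rwa [splitAfter_of_lt hba, splitAfter_of_le le_rfl] at this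
  exact ⟨le_antisymm (not_lt.1 hba) (not_lt.1 hab), rfl⟩

theorem exists_covBy_forall_eq [PartialOrder α] [OrderTop α] [Finite α] {f : Fin m → α}
    (hf : Monotone f) {k : Fin m} (hk : f k ≠ ⊤)
    (hcov : ∀ j, k < j → f k ⋖ f j) : ∃ s, f k ⋖ s ∧ ∀ j, k < j → f j = s := by
  by_cases h : ∃ j, k < j
  · obtain ⟨j, hj⟩ := h
    refine ⟨f j, hcov j hj, fun i hi => ?_⟩
    rcases le_total i j with hij | hij
    · exact ((hcov j hj).eq_or_eq (hcov i hi).le (hf hij)).resolve_left (hcov i hi).ne'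
    · exact (((hcov i hi).eq_or_eq (hcov j hj).le (hf hij)).resolve_left (hcov j hj).ne').symm
  · push Not at h
    obtain ⟨s, hs, -⟩ := exists_covBy_le_of_lt (lt_top_iff_ne_top.2 hk)
    exact ⟨s, hs, fun j hj => absurd hj (h j).not_gt⟩

theorem card_unit_subtype (p : Prop) [Decidable p] :
    Nat.card {_u : Unit // p} = if p then 1 else 0 := by
  split_ifs with h <;> simp [h]

theorem exists_leastAbove [PartialOrder α] [Finite α] :
    ∃ σ : α → α, ∀ p, MeetIrred p → IsLeast (Set.Ioi p) (σ p) := by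
  classical
  exact ⟨fun p => if h : MeetIrred p then (meetIrred_iff_exists_isLeast.1 h).choose else p,
    fun p hp => by simpa [hp] using (meetIrred_iff_exists_isLeast.1 hp).choose_spec⟩

theorem card_meetIrred_eq_add [PartialOrder α] [Finite α] [OrderBot α]
    [Decidable (MeetIrred (⊥ : α))] :
    Nat.card {p : α // MeetIrred p} =
      Nat.card {p : α // MeetIrred p ∧ p ≠ ⊥} + if MeetIrred (⊥ : α) then 1 else 0 := by
  rw [← card_unit_subtype, ← Nat.card_sum]
  refine (Nat.card_eq_of_bijective (Sum.elim (fun p => ⟨p.1, p.2.1⟩) fun u => ⟨⊥, u.2⟩)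
    ⟨Function.Injective.sumElim ?_ ?_ ?_, ?_⟩).symm
  · rintro ⟨p, hp⟩ ⟨q, hq⟩ h
    simpa using h
  · rintro ⟨u, hu⟩ ⟨v, hv⟩ -
    rfl
  · rintro ⟨p, hp⟩ ⟨u, hu⟩ h
    exact hp.2 (congrArg Subtype.val h)
  · rintro ⟨p, hp⟩
    by_cases h : p = ⊥
    · subst h
      exact ⟨Sum.inr ⟨(), hp⟩, rfl⟩
    · exact ⟨Sum.inl ⟨p, hp, h⟩, rfl⟩

variable [PartialOrder α] [Finite α] [BoundedOrder α] [Nontrivial α]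

theorem IsMCoverTuple.update {f : Fin m → α} (hf : IsMCoverTuple m f) {k : Fin m} {x : α}
    (h₁ : ∀ j < k, f j = ⊥ ∨ f j ⩿ x) (h₂ : ∀ j, k < j → x = ⊥ ∨ x ⩿ f j) :
    IsMCoverTuple m (Function.update f k x) := by
  refine isMCoverTuple_iff.2 fun i j hij => ?_
  rcases eq_or_ne i k with rfl | hi
  · simpa [hij.ne'] using h₂ j hij
  · rcases eq_or_ne j k with rfl | hj
    · simpa [hij.ne] using h₁ i hij
    · simpa [hi, hj] using hf.eq_bot_or_wcovBy hij

theorem isMCoverTuple_botThen (a : Fin m) (p : α) : IsMCoverTuple m (botThen a p) := by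
  refine isMCoverTuple_iff.2 fun i j hij => ?_
  rcases lt_or_ge i a with h | h
  · exact Or.inl (botThen_of_lt h)
  · rw [botThen_of_le h, botThen_of_le (h.trans hij.le)]
    exact Or.inr (WCovBy.refl _)

theorem isMCoverTuple_splitAfter (a : Fin m) {p q : α} (h : p ⩿ q) :
    IsMCoverTuple m (splitAfter a p q) := by
  refine isMCoverTuple_iff.2 fun i j hij => ?_
  rcases lt_or_ge a i with hi | hi
  · rw [splitAfter_of_lt hi, splitAfter_of_lt (hi.trans hij)]
    exact Or.inr (WCovBy.refl _)
  · rw [splitAfter_of_le hi]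
    rcases lt_or_ge a j with hj | hj
    · rw [splitAfter_of_lt hj]; exact Or.inr h
    · rw [splitAfter_of_le hj]; exact Or.inr (WCovBy.refl _)

/-- The join-irreducible elements of the `m`-cover poset, together with
`JoinIrred.exists_eq_botThen`. -/
theorem joinIrred_botThen {a : Fin m} {p : α} :
    JoinIrred (⟨botThen a p, isMCoverTuple_botThen a p⟩ : MCover α m) ↔ JoinIrred p := by
  have hupd : ∀ q, q ⩿ p → IsMCoverTuple m (Function.update (botThen a p) a q) := fun q hq =>
    (isMCoverTuple_botThen a p).update (fun j hj => Or.inl (botThen_of_lt hj))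
      fun j hj => Or.inr (by rwa [botThen_of_le hj.le])
  have hlt : ∀ q, q < p → Function.update (botThen a p) a q < botThen a p := fun q hq =>
    update_lt_self_iff.2 (by rwa [botThen_of_le le_rfl])
  rw [joinIrred_iff_exists_isGreatest, joinIrred_iff_exists_isGreatest]
  constructor
  · rintro ⟨c, hc, hmax⟩
    refine ⟨c.1 a, apply_lt_of_lt_botThen c.2.monotone hc, fun y hy => ?_⟩
    obtain ⟨z, hyz, hz⟩ := exists_le_covBy_of_lt hy
    have hle : Function.update (botThen a p) a z ≤ c.1 :=
      hmax (a := ⟨_, hupd z hz.wcovBy⟩) (hlt z hz.lt)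
    simpa using hyz.trans (by simpa using hle a)
  · rintro ⟨c, hc⟩
    refine ⟨⟨_, hupd c hc.covBy.wcovBy⟩, hlt c hc.1, fun g hg => ?_⟩
    have hga : g.1 a < p := apply_lt_of_lt_botThen g.2.monotone hg
    exact le_update_iff.2 ⟨hc.2 hga, fun i _ => (show g.1 ≤ botThen a p from le_of_lt hg) i⟩

theorem JoinIrred.exists_eq_botThen {f : MCover α m} (hf : JoinIrred f) :
    ∃ a p, f.1 = botThen a p := by
  obtain ⟨c, hc, hmax⟩ := joinIrred_iff_exists_isGreatest.1 hf
  replace hc : c.1 < f.1 := hc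
  have hcf : ∀ i (x : α), x < f.1 i → IsMCoverTuple m (Function.update f.1 i x) →
      ∀ j ≠ i, f.1 j ≤ c.1 j := fun i x hx hv j hj => by
    have hle : Function.update f.1 i x ≤ c.1 :=
      hmax (a := ⟨_, hv⟩) (show Function.update f.1 i x < f.1 from update_lt_self_iff.2 hx)
    simpa [hj] using hle j
  obtain ⟨a, ha, hbot⟩ := exists_first (P := fun i => f.1 i ≠ ⊥) (by
    by_contra! h
    exact hc.not_ge fun i => by simp [h i])
  push Not at hbot
  refine ⟨a, f.1 a, ?_⟩
  by_contra hne
  obtain ⟨k, ⟨hak, hk⟩, hfirst⟩ := exists_first (P := fun i => a ≤ i ∧ f.1 i ≠ f.1 a) (by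
    by_contra! h
    refine hne (funext fun i => ?_)
    rcases lt_or_ge i a with hi | hi
    · rw [botThen_of_lt hi, hbot i hi]
    · rw [botThen_of_le hi, h i hi])
  have hka : a ≠ k := fun h => hk (by rw [h])
  have h₁ := hcf a ⊥ (bot_lt_iff_ne_bot.2 ha)
    (f.2.update (fun j hj => Or.inl (hbot j hj)) fun j _ => Or.inl rfl)
  have h₂ := hcf k (f.1 a) (lt_of_le_of_ne (f.2.monotone hak) hk.symm)
    (f.2.update (fun j hj => ?_) fun j hj => Or.inr (f.2.wcovBy (hak.trans hj.le) ha))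
  · refine hc.not_ge fun i => ?_
    rcases eq_or_ne i a with rfl | hi
    · exact h₂ i hka
    · exact h₁ i hi
  · rcases lt_or_ge j a with hja | hja
    · exact Or.inl (hbot j hja)
    · have : f.1 j = f.1 a := by
        by_contra h
        exact hfirst j hj ⟨hja, h⟩
      exact Or.inr (this ▸ WCovBy.refl _)

theorem card_joinIrred_mCover :
    Nat.card {f : MCover α m // JoinIrred f} = m * Nat.card {p : α // JoinIrred p} := by
  rw [← Nat.card_eq_of_bijective (fun x : Fin m × {p : α // JoinIrred p} =>
    (⟨⟨_, isMCoverTuple_botThen x.1 x.2.1⟩, joinIrred_botThen.2 x.2.2⟩ :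
      {f : MCover α m // JoinIrred f})) ⟨?_, ?_⟩]
  · simp [Nat.card_prod]
  · rintro ⟨a, p, hp⟩ ⟨b, q, hq⟩ h
    obtain ⟨rfl, rfl⟩ := botThen_injective hp.ne_bot hq.ne_bot (congrArg (fun f => f.1.1) h)
    rfl
  · rintro ⟨⟨f, hf⟩, hf'⟩
    obtain ⟨a, p, rfl⟩ := hf'.exists_eq_botThen
    exact ⟨⟨a, p, joinIrred_botThen.1 hf'⟩, rfl⟩

theorem meetIrred_of_eq_splitAfter {f : MCover α m} {a : Fin m} {p q : α}
    (hq : IsLeast (Set.Ioi p) q) (hf : f.1 = splitAfter a p q) (ha : p ≠ ⊥ ∨ ∀ i, i ≤ a) :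
    MeetIrred f := by
  have hfa : f.1 a = p := by rw [hf, splitAfter_of_le le_rfl]
  have hfi : ∀ i, a < i → f.1 i = q := fun i hi => by rw [hf, splitAfter_of_lt hi]
  have hv : IsMCoverTuple m (Function.update f.1 a q) :=
    f.2.update (fun j hj => Or.inr (by
      rw [hf, splitAfter_of_le hj.le]; exact hq.covBy.wcovBy))
      fun j hj => Or.inr (hfi j hj ▸ WCovBy.refl _)
  refine meetIrred_iff_exists_isLeast.2 ⟨⟨_, hv⟩, show f.1 < Function.update f.1 a q from
    lt_update_self_iff.2 (hfa ▸ hq.1), fun g hg => ?_⟩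
  replace hg : f.1 < g.1 := hg
  refine update_le_iff.2 ⟨hq.2 (lt_of_le_of_ne (hfa ▸ hg.le a) fun hga => ?_), fun i _ => hg.le i⟩
  refine hg.not_ge fun i => ?_
  rcases lt_or_ge a i with hi | hi
  · have hp : p ≠ ⊥ := ha.resolve_right fun h => (h i).not_gt hi
    have hw : p ⩿ g.1 i := hga ▸ g.2.wcovBy hi.le (hga ▸ hp)
    have hqi : q ≤ g.1 i := hfi i hi ▸ hg.le i
    rw [hfi i hi]
    exact ((hw.eq_or_eq hq.1.le hqi).resolve_left hq.1.ne').ge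
  · rw [hf, splitAfter_of_le hi, hga]
    exact g.2.monotone hi

/-- If `⊤` has a unique lower cover, then there is a least non-bottom element among `⊤` and the
elements covered by it. -/
theorem exists_least_wcovBy_top (h : JoinIrred (⊤ : α)) :
    ∃ c : α, c ≠ ⊥ ∧ c ⩿ ⊤ ∧ ∀ z : α, z ≠ ⊥ → z ⩿ ⊤ → c ≤ z := by
  obtain ⟨c, hc⟩ := joinIrred_iff_exists_isGreatest.1 h
  by_cases hc0 : c = ⊥
  · refine ⟨⊤, top_ne_bot, WCovBy.refl _, fun z hz _ => ?_⟩
    by_contra hzt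
    exact hz (le_bot_iff.1 (hc0 ▸ hc.2 (lt_top_iff_ne_top.2 fun h => hzt h.ge)))
  · refine ⟨c, hc0, hc.covBy.wcovBy, fun z _ hz => ?_⟩
    rcases wcovBy_iff_covBy_or_eq.1 hz with hz | rfl
    · exact ((hc.2 hz.lt).eq_of_not_lt fun h => hz.2 h hc.1).ge
    · exact le_top

theorem meetIrred_of_eq_botThen_top {f : MCover α m} {a b : Fin m} (hba : b < a)
    (hcons : ∀ i, b < i → a ≤ i) (hf : f.1 = botThen a ⊤) (htop : JoinIrred (⊤ : α)) :
    MeetIrred f := by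
  obtain ⟨c, hc0, hct, hmin⟩ := exists_least_wcovBy_top htop
  have hfb : ∀ i, i ≤ b → f.1 i = ⊥ := fun i hi => by rw [hf, botThen_of_lt (hi.trans_lt hba)]
  have hfa : ∀ i, a ≤ i → f.1 i = ⊤ := fun i hi => by rw [hf, botThen_of_le hi]
  have hv : IsMCoverTuple m (Function.update f.1 b c) :=
    f.2.update (fun j hj => Or.inl (hfb j hj.le))
      fun j hj => Or.inr (by rwa [hfa j (hcons j hj)])
  refine meetIrred_iff_exists_isLeast.2 ⟨⟨_, hv⟩, show f.1 < Function.update f.1 b c from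
    lt_update_self_iff.2 (by rw [hfb b le_rfl]; exact bot_lt_iff_ne_bot.2 hc0), fun g hg => ?_⟩
  replace hg : f.1 < g.1 := hg
  have hgb : g.1 b ≠ ⊥ := fun hgb => hg.not_ge fun i => by
    rcases lt_or_ge b i with hi | hi
    · simp [hfa i (hcons i hi)]
    · exact (g.2.monotone hi).trans (by simp [hgb])
  have hga : g.1 a = ⊤ := top_le_iff.1 (hfa a le_rfl ▸ hg.le a)
  exact update_le_iff.2 ⟨hmin _ hgb (hga ▸ g.2.wcovBy hba.le hgb), fun i _ => hg.le i⟩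

/-- Every meet-irreducible element of the `m`-cover poset has one of the shapes of
`meetIrred_of_eq_splitAfter` and `meetIrred_of_eq_botThen_top`. -/
theorem MeetIrred.exists_eq {f : MCover α m} (hf : MeetIrred f) :
    (∃ a p q, IsLeast (Set.Ioi p) q ∧ f.1 = splitAfter a p q ∧ (p ≠ ⊥ ∨ ∀ i, i ≤ a)) ∨
      ∃ a b, b < a ∧ (∀ i, b < i → a ≤ i) ∧ f.1 = botThen a ⊤ ∧ JoinIrred (⊤ : α) := by
  obtain ⟨c, hc, hmin⟩ := meetIrred_iff_exists_isLeast.1 hf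
  replace hc : f.1 < c.1 := hc
  have hcg : ∀ g, IsMCoverTuple m g → f.1 < g → c.1 ≤ g := fun g hg hfg => hmin (a := ⟨g, hg⟩) hfg
  have hne : ∀ i x, f.1 i < x → IsMCoverTuple m (Function.update f.1 i x) →
      c.1 i ≤ x ∧ ∀ j ≠ i, c.1 j ≤ f.1 j := fun i x hx hv =>
    le_update_iff.1 (hcg _ hv (lt_update_self_iff.2 hx))
  obtain ⟨i₀, hi₀⟩ := (Pi.lt_def.1 hc).2
  by_cases hex : (∃ b, f.1 b = ⊥) ∧ ∃ a, f.1 a ≠ ⊥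
  · right
    obtain ⟨b, hb, hblast⟩ := exists_last hex.1
    obtain ⟨a, ha, hafirst⟩ := exists_first hex.2
    push Not at hafirst
    have hba : b < a := by
      by_contra! h
      exact ha (le_bot_iff.1 (hb ▸ f.2.monotone h))
    have hcons : ∀ i, b < i → a ≤ i := fun i hi => by
      by_contra! h
      exact hblast i hi (hafirst i h)
    have hbot : ∀ i, i ≤ b → f.1 i = ⊥ := fun i hi => hafirst i (hi.trans_lt hba)
    have hupd : ∀ x, (∀ j, a ≤ j → x ⩿ f.1 j) → IsMCoverTuple m (Function.update f.1 b x) :=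
      fun x hx => f.2.update (fun j hj => Or.inl (hbot j hj.le)) fun j hj =>
        Or.inr (hx j (hcons j hj))
    have hatop : f.1 a = ⊤ := by
      by_contra htop
      obtain ⟨k, hk, hklast⟩ := exists_last (P := fun i => f.1 i = f.1 a) ⟨a, rfl⟩
      have hak : a ≤ k := not_lt.1 fun h => hklast a h rfl
      have hk0 : f.1 k ≠ ⊥ := hk ▸ ha
      obtain ⟨s, hs, hsk⟩ := exists_covBy_forall_eq f.2.monotone (hk ▸ htop) fun j hj =>
        (f.2.wcovBy hj.le hk0).covBy_of_ne fun h => hklast j hj (h ▸ hk)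
      have h₁ := hne b (f.1 a) (by rw [hb]; exact bot_lt_iff_ne_bot.2 ha)
        (hupd _ fun j hj => f.2.wcovBy hj ha)
      have h₂ := hne k s hs.lt (f.2.update (fun j hj => ?_) fun j hj =>
        Or.inr (hsk j hj ▸ WCovBy.refl _))
      · refine hc.not_ge fun i => ?_
        rcases eq_or_ne i b with rfl | hi
        · exact h₂.2 i (hba.trans_le hak).ne
        · exact h₁.2 i hi
      · rcases lt_or_ge j a with hja | hja
        · exact Or.inl (hafirst j hja)
        · have : f.1 j = f.1 k := le_antisymm (f.2.monotone hj.le) (hk ▸ f.2.monotone hja)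
          exact Or.inr (this ▸ hs.wcovBy)
    have hft : ∀ i, a ≤ i → f.1 i = ⊤ := fun i hi => top_le_iff.1 (hatop ▸ f.2.monotone hi)
    refine ⟨a, b, hba, hcons, funext fun i => ?_, ?_⟩
    · rcases lt_or_ge i a with hi | hi
      · rw [botThen_of_lt hi, hafirst i hi]
      · rw [botThen_of_le hi, hft i hi]
    · refine joinIrred_iff_exists_isGreatest.2 ?_
      by_cases hbt : (⊥ : α) ⋖ ⊤
      · exact ⟨⊥, hbt.lt, fun y hy => (not_ne_iff.1 fun h => hbt.2 (bot_lt_iff_ne_bot.2 h) hy).le⟩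
      have hcr : ∀ r : α, r ⋖ ⊤ → (∀ j ≠ b, c.1 j ≤ f.1 j) ∧ c.1 b ≤ r := fun r hr => by
        have hr0 : r ≠ ⊥ := fun h => hbt (h ▸ hr)
        exact (hne b r (by rw [hb]; exact bot_lt_iff_ne_bot.2 hr0)
          (hupd r fun j hj => by rw [hft j hj]; exact hr.wcovBy)).symm
      obtain ⟨r, -, hr⟩ := exists_le_covBy_of_lt (bot_lt_top (α := α))
      have hcb : c.1 b ≠ ⊥ := fun h => hc.not_ge fun i => by
        rcases eq_or_ne i b with rfl | hi
        · simp [h]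
        · exact (hcr r hr).1 i hi
      have hca : c.1 a = ⊤ := top_le_iff.1 (hatop ▸ hc.le a)
      have hw : c.1 b ⩿ ⊤ := hca ▸ c.2.wcovBy hba.le hcb
      have hlt : c.1 b < ⊤ := (hcr r hr).2.trans_lt hr.lt
      refine ⟨c.1 b, hlt, fun y hy => ?_⟩
      obtain ⟨z, hyz, hz⟩ := exists_le_covBy_of_lt hy
      exact hyz.trans ((hw.eq_or_eq (hcr z hz).2 hz.le).resolve_right hz.ne).le
  · left
    push Not at hex
    obtain ⟨z, -, hz⟩ := exists_first (P := fun _ : Fin m => True) ⟨i₀, trivial⟩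
    replace hz : ∀ j, z ≤ j := fun j => not_lt.1 fun h => hz j h trivial
    obtain ⟨a, ha, halast⟩ := exists_last (P := fun i => f.1 i = f.1 z) ⟨z, rfl⟩
    have hle : ∀ i, i ≤ a → f.1 i = f.1 a := fun i hi =>
      le_antisymm (f.2.monotone hi) (ha ▸ f.2.monotone (hz i))
    have hbot : f.1 a = ⊥ → ∀ i, f.1 i = ⊥ := fun h => hex ⟨a, h⟩
    have htop : f.1 a ≠ ⊤ := fun h => by
      have : f.1 i₀ = ⊤ := top_le_iff.1 (h ▸ ha ▸ f.2.monotone (hz i₀))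
      exact not_top_lt (this ▸ hi₀)
    obtain ⟨q, hq, hqa⟩ := exists_covBy_forall_eq f.2.monotone htop fun j hj =>
      (f.2.wcovBy hj.le fun h => halast j hj (by simp [hbot h])).covBy_of_ne
        fun h => halast j hj (h ▸ ha)
    refine ⟨a, f.1 a, q, ⟨hq.lt, fun y hy => ?_⟩, funext fun i => ?_, ?_⟩
    · by_contra hqy
      obtain ⟨r, hyr, hr⟩ :=
        (Set.toFinite {r | y ≤ r ∧ ¬ q ≤ r}).exists_le_maximal ⟨le_rfl, hqy⟩
      obtain ⟨s, hs, -⟩ := exists_covBy_le_of_lt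
        (lt_top_iff_ne_top.2 fun h : r = ⊤ => hr.1.2 (h ▸ le_top))
      have hqs : q ≤ s := by
        by_contra h
        exact (hr.2 ⟨hyr.trans hs.le, h⟩ hs.le).not_gt hs.lt
      have hlt : f.1 < splitAfter a r s := by
        refine Pi.lt_def.2 ⟨fun i => ?_, a, ?_⟩
        · rcases lt_or_ge a i with hi | hi
          · rwa [splitAfter_of_lt hi, hqa i hi]
          · rw [splitAfter_of_le hi, hle i hi]
            exact le_of_lt (lt_of_lt_of_le hy hyr)
        · rw [splitAfter_of_le le_rfl]
          exact lt_of_lt_of_le hy hyr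
      have hcr : c.1 a ≤ r := by
        simpa only [splitAfter_of_le le_rfl] using
          hcg _ (isMCoverTuple_splitAfter a hs.wcovBy) hlt a
      have hcq := hne a q hq.lt (f.2.update (fun j hj => Or.inr (hle j hj.le ▸ hq.wcovBy))
        fun j hj => Or.inr (hqa j hj ▸ WCovBy.refl _))
      obtain rfl : i₀ = a := by
        by_contra h
        exact (hcq.2 i₀ h).not_gt hi₀
      exact hr.1.2 (((hq.wcovBy.eq_or_eq hi₀.le hcq.1).resolve_left hi₀.ne') ▸ hcr)
    · rcases lt_or_ge a i with hi | hi
      · rw [splitAfter_of_lt hi, hqa i hi]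
      · rw [splitAfter_of_le hi, hle i hi]
    · by_cases h : f.1 a = ⊥
      · exact Or.inr fun i => not_lt.1 fun hi => halast i hi (by simp [hbot h])
      · exact Or.inl h

theorem card_meetIrred_mCover {n : ℕ} [Decidable (MeetIrred (⊥ : α))]
    [Decidable (JoinIrred (⊤ : α))] :
    Nat.card {f : MCover α (n + 1) // MeetIrred f} =
      (n + 1) * Nat.card {p : α // MeetIrred p ∧ p ≠ ⊥} +
        ((if MeetIrred (⊥ : α) then 1 else 0) + n * if JoinIrred (⊤ : α) then 1 else 0) := by
  obtain ⟨σ, hσ⟩ := exists_leastAbove (α := α)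
  let F : (Fin (n + 1) × {p : α // MeetIrred p ∧ p ≠ ⊥}) ⊕
      ({_u : Unit // MeetIrred (⊥ : α)} ⊕ (Fin n × {_u : Unit // JoinIrred (⊤ : α)})) →
      (Fin (n + 1) → α) :=
    Sum.elim (fun x => splitAfter x.1 x.2.1 (σ x.2.1))
      (Sum.elim (fun _ => ⊥) fun x => botThen x.1.succ ⊤)
  have hσne : ∀ p, MeetIrred p → p ≠ σ p := fun p hp => (hσ p hp).1.ne
  have hF : Function.Injective F := by
    refine Function.Injective.sumElim ?_ (Function.Injective.sumElim ?_ ?_ ?_) ?_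
    · rintro ⟨a, p, hp⟩ ⟨b, q, hq⟩ h
      obtain ⟨rfl, rfl⟩ := splitAfter_injective (hσne p hp.1) (hσne q hq.1) h
      rfl
    · rintro ⟨u, hu⟩ ⟨v, hv⟩ -
      rfl
    · rintro ⟨a, u, hu⟩ ⟨b, v, hv⟩ h
      obtain ⟨hab, -⟩ := botThen_injective top_ne_bot top_ne_bot h
      obtain rfl : a = b := Fin.succ_injective _ hab
      rfl
    · rintro u ⟨a, v⟩ h
      have := congrFun h (Fin.last n)
      simp [botThen_of_le (Fin.le_last _)] at this
    · rintro ⟨a, p, hp⟩ (u | ⟨b, v⟩) h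
      · exact hp.2 (by simpa [splitAfter_of_le (Fin.zero_le _)] using congrFun h 0)
      · exact hp.2 (by simpa [splitAfter_of_le (Fin.zero_le _), botThen_of_lt] using congrFun h 0)
  have hrange : Set.range F = {f | ∃ h, MeetIrred (⟨f, h⟩ : MCover α (n + 1))} := by
    ext f
    constructor
    · rintro ⟨(⟨a, p, hp⟩ | ⟨u, hu⟩ | ⟨b, u, hu⟩), rfl⟩
      · exact ⟨isMCoverTuple_splitAfter a (hσ p hp.1).covBy.wcovBy,
          meetIrred_of_eq_splitAfter (hσ p hp.1) rfl (Or.inl hp.2)⟩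
      · have hv : IsMCoverTuple (n + 1) (⊥ : Fin (n + 1) → α) :=
          isMCoverTuple_iff.2 fun _ _ _ => Or.inl rfl
        refine ⟨hv, meetIrred_of_eq_splitAfter (a := Fin.last n) (hσ ⊥ hu) ?_
          (Or.inr Fin.le_last)⟩
        funext i
        rw [splitAfter_of_le (Fin.le_last i)]
        rfl
      · exact ⟨isMCoverTuple_botThen _ _, meetIrred_of_eq_botThen_top
          (Fin.castSucc_lt_succ (i := b)) (fun i hi => Fin.castSucc_lt_iff_succ_le.1 hi) rfl hu⟩
    · rintro ⟨hf, hf'⟩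
      rcases hf'.exists_eq with ⟨a, p, q, hq, rfl, ha⟩ | ⟨a, b, hba, hcons, rfl, htop⟩
      · have hp : MeetIrred p := meetIrred_iff_exists_isLeast.2 ⟨q, hq⟩
        obtain rfl := (hσ p hp).unique hq
        by_cases hp0 : p = ⊥
        · subst hp0
          refine ⟨Sum.inr (Sum.inl ⟨(), hp⟩), funext fun i => ?_⟩
          exact (splitAfter_of_le (ha.resolve_left (by simp) i)).symm
        · exact ⟨Sum.inl ⟨a, p, hp, hp0⟩, rfl⟩
      · obtain ⟨k, rfl⟩ := Fin.exists_succ_eq.2 (Fin.ne_zero_of_lt hba)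
        exact ⟨Sum.inr (Sum.inr ⟨k, (), htop⟩), rfl⟩
  rw [Nat.card_congr (Equiv.subtypeSubtypeEquivSubtypeExists _ _)]
  change Nat.card {f | ∃ h, MeetIrred (⟨f, h⟩ : MCover α (n + 1))} = _
  rw [← hrange, Nat.card_range_of_injective hF]
  simp only [Nat.card_sum, Nat.card_prod, Nat.card_fin, card_unit_subtype]

end Irreducibles

/-- Counting irreducibles shows that `P^⟨m⟩` is extremal iff `m = 1` or `⊥ ∈ M(P) ↔ ⊤ ∈ J(P)`. -/
theorem extremal_mCover_iff {α : Type*} [Finite α] [PartialOrder α] [BoundedOrder α]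
    [Nontrivial α] (hext : Extremal α) (n : ℕ) :
    Extremal (MCover α (n + 1)) ↔ n = 0 ∨ (MeetIrred (⊥ : α) ↔ JoinIrred (⊤ : α)) := by
  classical
  have hM := hext.2
  rw [card_meetIrred_eq_add] at hM
  rw [Extremal, posetLength_mCover n.succ_pos, card_joinIrred_mCover, card_meetIrred_mCover,
    hext.1, ← hM]
  by_cases h₁ : MeetIrred (⊥ : α) <;> by_cases h₂ : JoinIrred (⊤ : α) <;>
    simp [h₁, h₂, mul_add, add_comm]

theorem extremal_of_isEmpty {β : Type*} [PartialOrder β] [IsEmpty β] : Extremal β := by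
  have : posetLength β = 0 :=
    Nat.le_zero.1 (csSup_le' fun _ ⟨f, _⟩ => isEmptyElim (f 0))
  simp [Extremal, this]

/-- For an extremal bounded poset `P`, all m-cover posets are extremal iff
`⊥ ∈ M(P) ∧ ⊤ ∈ J(P)` or `⊥ ∉ M(P) ∧ ⊤ ∉ J(P)`. -/
theorem stmt_9 {α : Type*} [Fintype α] [PartialOrder α] [BoundedOrder α]
    (hext : Extremal α) :
    (∀ m : ℕ, 0 < m → Extremal (MCover α m)) ↔
      ((MeetIrred (⊥ : α) ∧ JoinIrred (⊤ : α)) ∨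
        (¬ MeetIrred (⊥ : α) ∧ ¬ JoinIrred (⊤ : α))) := by
  have hiff : ((MeetIrred (⊥ : α) ∧ JoinIrred (⊤ : α)) ∨
      (¬ MeetIrred (⊥ : α) ∧ ¬ JoinIrred (⊤ : α))) ↔
      (MeetIrred (⊥ : α) ↔ JoinIrred (⊤ : α)) := by tauto
  rw [hiff]
  rcases subsingleton_or_nontrivial α with hα | hα
  · refine iff_of_true (fun m hm => ?_) ?_
    · have : IsEmpty (MCover α m) :=
        ⟨fun ⟨_, _, _, _, p, q, _, hpq, _⟩ => hpq.ne (Subsingleton.elim p q)⟩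
      exact extremal_of_isEmpty
    · exact iff_of_false (fun ⟨⟨y, hy⟩, _⟩ => hy.ne (Subsingleton.elim _ _))
        fun ⟨⟨y, hy⟩, _⟩ => hy.ne (Subsingleton.elim _ _)
  · constructor
    · intro h
      exact ((extremal_mCover_iff hext 1).1 (h 2 two_pos)).resolve_left one_ne_zero
    · intro h m hm
      obtain ⟨n, rfl⟩ := Nat.exists_eq_succ_of_ne_zero hm.ne'
      exact (extremal_mCover_iff hext n).2 (Or.inr h)
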